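/- Let C := ∑_{n≥0} catalan(n)·X^n in the formal power series ring ℤ⟦X⟧. For every natural number k, the Fibonacci polynomial F_k, regarded as a formal power series, satisfies F_k·C^k·(1 − 2·X·C) = 1 − (X·C²)^k. -/

import Mathlib

open PowerSeries

/-- The Fibonacci polynomials: `F 0 = 0`, `F 1 = 1`, `F (k+2) = F (k+1) - X * F k`. -/
noncomputable def fibPoly : ℕ → Polynomial ℤ
  | 0 => 0
  | 1 => 1
  | (k + 2) => fibPoly (k + 1) - Polynomial.X * fibPoly k

/-- The Fibonacci polynomials regarded as formal power series over `ℤ`. -/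
noncomputable def fibPS (k : ℕ) : PowerSeries ℤ :=
  ((fibPoly k : Polynomial ℤ) : PowerSeries ℤ)

/-- The Catalan generating function `∑ catalan n • Xⁿ` over `ℤ`. -/
noncomputable def catalanGF : PowerSeries ℤ :=
  PowerSeries.mk fun n => (catalan n : ℤ)

/-!
If `c = 1 + x * c ^ 2`, then `a = 1 - x * c` and `b = x * c` satisfy `a + b = 1` and `a * b = x`, so
the characteristic polynomial `T ^ 2 - T + x` of the Fibonacci recurrence at `x` factors as
`(T - a) * (T - b)`, and Binet's formula reads `F k * (a - b) = a ^ k - b ^ k`. Multiplying it by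
`c ^ k` gives the identity, because `a * c = 1` and `b * c = x * c ^ 2`.
-/

section CommRing

variable {R : Type*} [CommRing R]

theorem eval₂_fibPoly_add_two (x : R) (k : ℕ) :
    (fibPoly (k + 2)).eval₂ (Int.castRingHom R) x =
      (fibPoly (k + 1)).eval₂ (Int.castRingHom R) x -
        x * (fibPoly k).eval₂ (Int.castRingHom R) x := by
  simp [fibPoly, Polynomial.eval₂_sub, Polynomial.eval₂_mul]

theorem eval₂_fibPoly_mul_sub {a b : R} (hab : a + b = 1) (k : ℕ) :
    (fibPoly k).eval₂ (Int.castRingHom R) (a * b) * (a - b) = a ^ k - b ^ k := by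
  induction k using Nat.twoStepInduction with
  | zero => simp [fibPoly]
  | one => simp [fibPoly]
  | more k ih ih_succ =>
    calc
      (fibPoly (k + 2)).eval₂ (Int.castRingHom R) (a * b) * (a - b)
      _ = (fibPoly (k + 1)).eval₂ (Int.castRingHom R) (a * b) * (a - b) -
            a * b * ((fibPoly k).eval₂ (Int.castRingHom R) (a * b) * (a - b)) := by
          rw [eval₂_fibPoly_add_two]; ring
      _ = (a + b) * (a ^ (k + 1) - b ^ (k + 1)) - a * b * (a ^ k - b ^ k) := by
          rw [ih, ih_succ, hab, one_mul]
      _ = a ^ (k + 2) - b ^ (k + 2) := by ring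

theorem fibPS_catalanGF_identity_general {x c : R} (hc : c = 1 + x * c ^ 2) (k : ℕ) :
    (fibPoly k).eval₂ (Int.castRingHom R) x * c ^ k * (1 - 2 * x * c) = 1 - (x * c ^ 2) ^ k := by
  have root_mul_root : (1 - x * c) * (x * c) = x := by linear_combination x * hc
  have root_mul_self : (1 - x * c) * c = 1 := by linear_combination hc
  have binet := eval₂_fibPoly_mul_sub (sub_add_cancel 1 (x * c)) k
  rw [root_mul_root] at binet
  calc
    (fibPoly k).eval₂ (Int.castRingHom R) x * c ^ k * (1 - 2 * x * c)
    _ = (fibPoly k).eval₂ (Int.castRingHom R) x * (1 - x * c - x * c) * c ^ k := by ring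
    _ = ((1 - x * c) * c) ^ k - (x * c * c) ^ k := by
        rw [binet, sub_mul, ← mul_pow, ← mul_pow]
    _ = 1 - (x * c ^ 2) ^ k := by rw [root_mul_self, one_pow, mul_assoc, ← sq]

end CommRing

theorem fibPS_eq_eval₂_X (k : ℕ) :
    fibPS k = (fibPoly k).eval₂ (Int.castRingHom (PowerSeries ℤ)) PowerSeries.X := by
  rw [← RingHom.eq_intCast' PowerSeries.C, Polynomial.eval₂_C_X_eq_coe, fibPS]

theorem map_catalanSeries_eq_catalanGF :
    PowerSeries.map (Nat.castRingHom ℤ) catalanSeries = catalanGF := by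
  ext n
  simp [catalanGF]

theorem catalanGF_eq_one_add_X_mul_sq : catalanGF = 1 + PowerSeries.X * catalanGF ^ 2 := by
  have h := congrArg (PowerSeries.map (Nat.castRingHom ℤ)) catalanSeries_sq_mul_X_add_one
  simp only [map_add, map_mul, map_pow, map_one, PowerSeries.map_X,
    map_catalanSeries_eq_catalanGF] at h
  rw [add_comm, mul_comm, h]

theorem fibPS_catalanGF_identity (k : ℕ) :
    fibPS k * catalanGF ^ k * (1 - 2 * PowerSeries.X * catalanGF) =
      1 - (PowerSeries.X * catalanGF ^ 2) ^ k := by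
  rw [fibPS_eq_eval₂_X]
  exact fibPS_catalanGF_identity_general catalanGF_eq_one_add_X_mul_sq k
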